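/- arXiv:2511.21868 — 2 statements merged into one kernel-verified Lean document; each statement's English description precedes it below -/
import Mathlib

section
/- Let ξ ∈ (0,1] be a constant. There exist constants C₀, C₁ > 0 (depending only on ξ) such that the following holds: if G is a d-regular graph on n vertices with d = n^ξ, and G satisfies the α-bipartite density condition for some α ∈ (√d, d] with α ≤ d/(C₀·(log d)²), then the mixing time satisfies τ_{1/n}(P) ≤ C₁·(log n / log(d/α))². -/
open Finset

/-- The random-walk matrix `P = A/d` of a graph `G` (intended: `d`-regular). -/
noncomputable def walkMatrix {n : ℕ} (G : SimpleGraph (Fin n)) [DecidableRel G.Adj]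
    (d : ℕ) : Matrix (Fin n) (Fin n) ℝ :=
  (d : ℝ)⁻¹ • G.adjMatrix ℝ

/-- `p` is a probability distribution on `Fin n`. -/
def IsProbDist {n : ℕ} (p : Fin n → ℝ) : Prop :=
  (∀ v, 0 ≤ p v) ∧ ∑ v, p v = 1

/-- Total variation distance of `p` from the uniform distribution on `Fin n`. -/
noncomputable def tvFromUniform {n : ℕ} (p : Fin n → ℝ) : ℝ :=
  (1 / 2) * ∑ v, |p v - 1 / (n : ℝ)|

/-- `d_TV(t)`: worst-case total variation distance from uniform after `t` steps
of the random walk. -/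
noncomputable def dTV {n : ℕ} (G : SimpleGraph (Fin n)) [DecidableRel G.Adj]
    (d t : ℕ) : ℝ :=
  sSup {x : ℝ | ∃ p : Fin n → ℝ, IsProbDist p ∧
    x = tvFromUniform ((walkMatrix G d ^ t).mulVec p)}

/-- The `ε`-mixing time `τ_ε(P)`. -/
noncomputable def mixingTime {n : ℕ} (G : SimpleGraph (Fin n)) [DecidableRel G.Adj]
    (d : ℕ) (ε : ℝ) : ℕ :=
  sInf {t : ℕ | dTV G d t ≤ ε}

/-- `|E(S,T)|`: the number of ordered edges `(u,v)` with `u ∈ S`, `v ∈ T`, `uv ∈ E`. -/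
def bipCount {n : ℕ} (G : SimpleGraph (Fin n)) [DecidableRel G.Adj]
    (S T : Finset (Fin n)) : ℕ :=
  ((S ×ˢ T).filter (fun e => G.Adj e.1 e.2)).card

/-- The `α`-bipartite density condition. -/
def BipDensity {n : ℕ} (G : SimpleGraph (Fin n)) [DecidableRel G.Adj]
    (d : ℕ) (α : ℝ) : Prop :=
  ∀ S T : Finset (Fin n),
    (bipCount G S T : ℝ) ≤ d * S.card * T.card / n + α * Real.sqrt (S.card * T.card)

/-- The `δ`-small-set `α`-bipartite density condition. -/
def SmallSetBipDensity {n : ℕ} (G : SimpleGraph (Fin n)) [DecidableRel G.Adj]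
    (d : ℕ) (α δ : ℝ) : Prop :=
  ∀ S T : Finset (Fin n), (S.card : ℝ) ≤ δ * n → (T.card : ℝ) ≤ δ * n →
    (bipCount G S T : ℝ) ≤ d * S.card * T.card / n + α * Real.sqrt (S.card * T.card)

/-!
Centring the random-walk matrix of a regular graph turns `P` into `P - J / n`. The density condition
is one-sided, but this matrix has vanishing row and column sums, so a lack of edges between `S` and
`T` is an excess of edges between `S` and `Tᶜ`; with `α / d = δ ^ 3` this gives the two-sided
discrepancy bound `δ ^ 2`, and blocks too small for this argument contain too few expected edges to
matter. On indicator vectors the discrepancy bound is a weak `ℓ²` estimate, and passing from weak to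
strong `ℓ²` costs a harmonic sum on each side, so `P - J / n` has `ℓ²` norm at most
`2 δ ^ 2 (1 + log n)`. This is at most `√δ` as soon as `d / α` beats `(log n) ^ 2`, and then order
`log n / log (d / α)` steps bring the walk within `1 / n` of uniform.
-/

section WeakToStrong

variable {ι κ : Type*}

lemma sq_sum_abs_le {f : ι → ℝ} {A : ℝ} (hf : ∀ S : Finset ι, (∑ i ∈ S, f i) ^ 2 ≤ A * #S)
    (S : Finset ι) : (∑ i ∈ S, |f i|) ^ 2 ≤ 2 * A * #S := by
  set S₁ := S.filter (0 ≤ f ·)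
  set S₂ := S.filter (¬ 0 ≤ f ·)
  have h_sum : ∑ i ∈ S, |f i| = ∑ i ∈ S₁, f i + -∑ i ∈ S₂, f i := by
    rw [← sum_filter_add_sum_filter_not S (0 ≤ f ·), ← sum_neg_distrib]
    congr 1
    · exact sum_congr rfl fun i hi => abs_of_nonneg (mem_filter.1 hi).2
    · exact sum_congr rfl fun i hi => abs_of_neg (not_le.1 (mem_filter.1 hi).2)
  have h_card : (#S : ℝ) = #S₁ + #S₂ := by
    exact_mod_cast (card_filter_add_card_filter_not (s := S) (0 ≤ f ·)).symm
  calc (∑ i ∈ S, |f i|) ^ 2 ≤ 2 * ((∑ i ∈ S₁, f i) ^ 2 + (-∑ i ∈ S₂, f i) ^ 2) := by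
        rw [h_sum]
        exact add_sq_le
    _ ≤ 2 * (A * #S₁ + A * #S₂) := by
        rw [neg_sq]
        gcongr <;> exact hf _
    _ = 2 * A * #S := by rw [h_card]; ring

lemma sum_sq_le_harmonic {f : ι → ℝ} {A : ℝ}
    (hf : ∀ S : Finset ι, (∑ i ∈ S, f i) ^ 2 ≤ A * #S) (S : Finset ι) :
    ∑ i ∈ S, f i ^ 2 ≤ 2 * A * harmonic #S := by
  classical
  induction hS : #S generalizing S with
  | zero => simp [card_eq_zero.1 hS]
  | succ m ih =>
    -- The entry of least modulus is at most the average of the moduli.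
    obtain ⟨a, ha, hmin⟩ := exists_min_image S (|f ·|) (card_pos.1 (by omega))
    have h_min : f a ^ 2 ≤ 2 * A * ((m + 1 : ℕ) : ℝ)⁻¹ := by
      have h_avg : (m + 1 : ℕ) * |f a| ≤ ∑ i ∈ S, |f i| := by
        rw [← nsmul_eq_mul, ← hS]
        exact card_nsmul_le_sum S _ _ hmin
      have h_sq : ((m + 1 : ℕ) * |f a|) ^ 2 ≤ 2 * A * (m + 1 : ℕ) := by
        rw [← hS] at h_avg ⊢
        exact (pow_le_pow_left₀ (by positivity) h_avg 2).trans (sq_sum_abs_le hf S)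
      rw [← div_eq_mul_inv, le_div_iff₀ (by positivity)]
      refine le_of_mul_le_mul_right (a := ((m + 1 : ℕ) : ℝ)) ?_ (by positivity)
      calc f a ^ 2 * (m + 1 : ℕ) * (m + 1 : ℕ) = ((m + 1 : ℕ) * |f a|) ^ 2 := by
            rw [mul_pow, sq_abs]; ring
        _ ≤ 2 * A * (m + 1 : ℕ) := h_sq
    have h_rest := ih (S.erase a) (by rw [card_erase_of_mem ha, hS, Nat.add_sub_cancel])
    rw [← sum_erase_add S _ ha, harmonic_succ]
    push_cast at h_min ⊢
    linarith

/-- The sum of the entries of a matrix over the block with rows `S` and columns `T`, the analogue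
of `|E(S, T)|` for a real matrix. -/
def blockSum (M : Matrix ι κ ℝ) (S : Finset ι) (T : Finset κ) : ℝ :=
  ∑ i ∈ S, ∑ j ∈ T, M i j

lemma blockSum_transpose (M : Matrix ι κ ℝ) (S : Finset ι) (T : Finset κ) :
    blockSum M.transpose T S = blockSum M S T :=
  sum_comm

lemma blockSum_sub (M N : Matrix ι κ ℝ) (S : Finset ι) (T : Finset κ) :
    blockSum (M - N) S T = blockSum M S T - blockSum N S T := by
  simp only [blockSum, Matrix.sub_apply, sum_sub_distrib]

variable [Fintype ι] [Fintype κ]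

/-- The weak-to-strong passage is made once for each index set: first in `j`, for the column sums
over a fixed set of rows, and then in `i`, for the vector `M *ᵥ v`. -/
lemma sum_sq_mulVec_le_harmonic {M : Matrix ι κ ℝ} {B : ℝ}
    (hM : ∀ S T, blockSum M S T ^ 2 ≤ B * (#S * #T)) (v : κ → ℝ) :
    ∑ i, M.mulVec v i ^ 2 ≤
      4 * B * harmonic (Fintype.card ι) * harmonic (Fintype.card κ) * ∑ j, v j ^ 2 := by
  have h_rows (S : Finset ι) :
      ∑ j, (∑ i ∈ S, M i j) ^ 2 ≤ 2 * (B * #S) * harmonic (Fintype.card κ) := by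
    refine sum_sq_le_harmonic (fun T => ?_) univ
    rw [sum_comm, mul_assoc]
    exact hM S T
  have h_sets (S : Finset ι) : (∑ i ∈ S, M.mulVec v i) ^ 2 ≤
      (2 * B * harmonic (Fintype.card κ) * ∑ j, v j ^ 2) * #S := by
    calc (∑ i ∈ S, M.mulVec v i) ^ 2 = (∑ j, (∑ i ∈ S, M i j) * v j) ^ 2 := by
          simp only [Matrix.mulVec, dotProduct, sum_mul]
          rw [sum_comm]
      _ ≤ (∑ j, (∑ i ∈ S, M i j) ^ 2) * ∑ j, v j ^ 2 := sum_mul_sq_le_sq_mul_sq _ _ _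
      _ ≤ 2 * (B * #S) * harmonic (Fintype.card κ) * ∑ j, v j ^ 2 := by gcongr; exact h_rows S
      _ = _ := by ring
  exact (sum_sq_le_harmonic h_sets univ).trans_eq (by rw [card_univ]; ring)

lemma sum_sq_mulVec_le_of_abs_blockSum_le {M : Matrix ι ι ℝ} {β : ℝ}
    (hM : ∀ S T, |blockSum M S T| ≤ β * √(#S * #T)) (v : ι → ℝ) :
    ∑ i, M.mulVec v i ^ 2 ≤ (2 * β * (1 + Real.log (Fintype.card ι))) ^ 2 * ∑ i, v i ^ 2 := by
  have h_sq (S T : Finset ι) : blockSum M S T ^ 2 ≤ β ^ 2 * (#S * #T) := by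
    rw [← sq_abs, ← Real.sq_sqrt (by positivity : (0 : ℝ) ≤ #S * #T), ← mul_pow]
    exact pow_le_pow_left₀ (abs_nonneg _) (hM S T) 2
  have h_harmonic : (0 : ℝ) ≤ harmonic (Fintype.card ι) := by
    exact_mod_cast sum_nonneg fun i _ => by positivity
  calc ∑ i, M.mulVec v i ^ 2
      ≤ 4 * β ^ 2 * harmonic (Fintype.card ι) * harmonic (Fintype.card ι) * ∑ i, v i ^ 2 :=
        sum_sq_mulVec_le_harmonic h_sq v
    _ = (2 * β) ^ 2 * (harmonic (Fintype.card ι) : ℝ) ^ 2 * ∑ i, v i ^ 2 := by ring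
    _ ≤ (2 * β) ^ 2 * (1 + Real.log (Fintype.card ι)) ^ 2 * ∑ i, v i ^ 2 := by
        gcongr
        exact harmonic_le_one_add_log _
    _ = _ := by ring

end WeakToStrong

section Discrepancy

open Matrix

variable {ι : Type*} [Fintype ι]

lemma neg_le_blockSum_of_mul_card_le {M : Matrix ι ι ℝ} {δ : ℝ}
    (h_row : ∀ i, ∑ j, M i j = 0) (hM : ∀ S T, blockSum M S T ≤ δ ^ 3 * √(#S * #T))
    {S T : Finset ι} (hT : δ ^ 2 * Fintype.card ι ≤ #T) :
    -(δ ^ 2 * √(#S * #T)) ≤ blockSum M S T := by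
  classical
  have h_compl : blockSum M S T = -blockSum M S Tᶜ := by
    rw [eq_neg_iff_add_eq_zero, blockSum, blockSum, ← sum_add_distrib]
    exact sum_eq_zero fun i _ => by rw [sum_add_sum_compl, h_row]
  have h_card : δ ^ 2 * #Tᶜ ≤ #T :=
    (mul_le_mul_of_nonneg_left (by exact_mod_cast card_le_univ Tᶜ) (sq_nonneg δ)).trans hT
  have h_sqrt : δ * √(#S * #Tᶜ) ≤ √(#S * #T) := by
    refine Real.le_sqrt_of_sq_le ?_
    rw [mul_pow, Real.sq_sqrt (by positivity), mul_left_comm]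
    gcongr
  rw [h_compl, neg_le_neg_iff]
  calc blockSum M S Tᶜ ≤ δ ^ 3 * √(#S * #Tᶜ) := hM S Tᶜ
    _ = δ ^ 2 * (δ * √(#S * #Tᶜ)) := by ring
    _ ≤ δ ^ 2 * √(#S * #T) := by gcongr

lemma neg_le_blockSum_of_card_le {M : Matrix ι ι ℝ} {δ : ℝ}
    (hM : ∀ i j, -(1 / Fintype.card ι : ℝ) ≤ M i j) {S T : Finset ι}
    (hS : #S ≤ δ ^ 2 * Fintype.card ι) (hT : #T ≤ δ ^ 2 * Fintype.card ι) :
    -(δ ^ 2 * √(#S * #T)) ≤ blockSum M S T := by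
  have h_sqrt : √(#S * #T) ≤ δ ^ 2 * Fintype.card ι := by
    refine Real.sqrt_le_iff.2 ⟨by positivity, ?_⟩
    rw [sq]
    gcongr
  calc -(δ ^ 2 * √(#S * #T))
      ≤ -(δ ^ 2 * (Fintype.card ι / Fintype.card ι : ℝ) * √(#S * #T)) := by
        gcongr
        exact mul_le_of_le_one_right (sq_nonneg δ) (div_self_le_one _)
    _ = -(δ ^ 2 * Fintype.card ι * √(#S * #T) / Fintype.card ι) := by ring
    _ ≤ -(√(#S * #T) * √(#S * #T) / Fintype.card ι) := by gcongr
    _ = ∑ _i ∈ S, ∑ _j ∈ T, -(1 / Fintype.card ι : ℝ) := by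
        rw [Real.mul_self_sqrt (by positivity)]
        simp only [sum_const, nsmul_eq_mul]
        ring
    _ ≤ blockSum M S T := sum_le_sum fun _ _ => sum_le_sum fun _ _ => hM _ _

lemma abs_blockSum_le_of_blockSum_le {M : Matrix ι ι ℝ} {δ : ℝ} (hδ₀ : 0 ≤ δ)
    (hδ₁ : δ ≤ 1) (h_entry : ∀ i j, -(1 / Fintype.card ι : ℝ) ≤ M i j)
    (h_row : ∀ i, ∑ j, M i j = 0) (h_col : ∀ j, ∑ i, M i j = 0)
    (hM : ∀ S T, blockSum M S T ≤ δ ^ 3 * √(#S * #T)) (S T : Finset ι) :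
    |blockSum M S T| ≤ δ ^ 2 * √(#S * #T) := by
  refine abs_le.2 ⟨?_, (hM S T).trans ?_⟩
  · rcases le_total (δ ^ 2 * Fintype.card ι) #T with hT | hT
    · exact neg_le_blockSum_of_mul_card_le h_row hM hT
    rcases le_total (δ ^ 2 * Fintype.card ι) #S with hS | hS
    · rw [← blockSum_transpose, mul_comm (#S : ℝ)]
      refine neg_le_blockSum_of_mul_card_le (M := Mᵀ) h_col (fun S T => ?_) hS
      rw [blockSum_transpose, mul_comm (#S : ℝ)]
      exact hM T S
    · exact neg_le_blockSum_of_card_le h_entry hS hT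
  · gcongr ?_ * _
    exact pow_le_pow_of_le_one hδ₀ hδ₁ (by norm_num)

/-- The matrix `J / |ι|` all of whose entries are `1 / |ι|`: the orthogonal projection onto the
constant vectors, and the one-step limit that a mixing walk approximates. -/
noncomputable def averagingMatrix (ι : Type*) [Fintype ι] : Matrix ι ι ℝ :=
  Matrix.of fun _ _ => 1 / Fintype.card ι

lemma blockSum_averagingMatrix (S T : Finset ι) :
    blockSum (averagingMatrix ι) S T = #S * #T / Fintype.card ι := by
  simp only [blockSum, averagingMatrix, of_apply, sum_const, nsmul_eq_mul]
  ring

lemma sum_averagingMatrix [Nonempty ι] (i : ι) : ∑ j, averagingMatrix ι i j = 1 := by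
  simp [averagingMatrix]

end Discrepancy

section DoublyStochastic

open Matrix

variable {ι : Type*} [Fintype ι] [DecidableEq ι] {P : Matrix ι ι ℝ}

lemma sum_sq_sub_averagingMatrix_mulVec_le (hP : P ∈ doublyStochastic ℝ ι) {δ : ℝ} (hδ₀ : 0 ≤ δ)
    (hδ₁ : δ ≤ 1)
    (h : ∀ S T, blockSum P S T ≤ #S * #T / Fintype.card ι + δ ^ 3 * √(#S * #T)) (v : ι → ℝ) :
    ∑ i, ((P - averagingMatrix ι) *ᵥ v) i ^ 2 ≤
      (2 * δ ^ 2 * (1 + Real.log (Fintype.card ι))) ^ 2 * ∑ i, v i ^ 2 := by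
  refine sum_sq_mulVec_le_of_abs_blockSum_le
    (abs_blockSum_le_of_blockSum_le hδ₀ hδ₁ (fun i j => ?_) (fun i => ?_) (fun j => ?_)
      fun S T => ?_) v
  · simpa [averagingMatrix] using nonneg_of_mem_doublyStochastic hP
  · have : Nonempty ι := ⟨i⟩
    simp only [Matrix.sub_apply, sum_sub_distrib, sum_row_of_mem_doublyStochastic hP,
      sum_averagingMatrix, sub_self]
  · have : Nonempty ι := ⟨j⟩
    simp only [Matrix.sub_apply, sum_sub_distrib, sum_col_of_mem_doublyStochastic hP]
    exact sub_eq_zero.2 (sum_averagingMatrix j).symm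
  · rw [blockSum_sub, blockSum_averagingMatrix]
    linarith [h S T]

lemma mulVec_sub_uniform_eq (hP : P ∈ doublyStochastic ℝ ι) {p : ι → ℝ} (hp : ∑ i, p i = 1) :
    (fun i => (P *ᵥ p) i - 1 / Fintype.card ι) =
      (P - averagingMatrix ι) *ᵥ fun i => p i - 1 / Fintype.card ι := by
  ext i
  have : Nonempty ι := ⟨i⟩
  have h_row := sum_row_of_mem_doublyStochastic hP i
  have h_avg := sum_averagingMatrix i
  simp only [averagingMatrix, of_apply] at h_avg
  simp only [mulVec, dotProduct, Matrix.sub_apply, averagingMatrix, of_apply, mul_sub, sub_mul,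
    sum_sub_distrib, ← sum_mul, ← mul_sum, hp, h_row, h_avg]
  ring

lemma sum_sq_pow_mulVec_sub_uniform_le (hP : P ∈ doublyStochastic ℝ ι) {r : ℝ} (hr : 0 ≤ r)
    (h : ∀ v, ∑ i, ((P - averagingMatrix ι) *ᵥ v) i ^ 2 ≤ r * ∑ i, v i ^ 2)
    {p : ι → ℝ} (hp : ∑ i, p i = 1) (t : ℕ) :
    ∑ i, ((P ^ t *ᵥ p) i - 1 / Fintype.card ι) ^ 2 ≤
      r ^ t * ∑ i, (p i - 1 / Fintype.card ι) ^ 2 := by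
  induction t with
  | zero => simp
  | succ t ih =>
    have h_sum : ∑ i, (P ^ t *ᵥ p) i = 1 := by
      rw [sum_mulVec_of_mem_doublyStochastic (pow_mem hP t), hp]
    have h_step := mulVec_sub_uniform_eq hP h_sum
    calc ∑ i, ((P ^ (t + 1) *ᵥ p) i - 1 / Fintype.card ι) ^ 2
        = ∑ i, ((P - averagingMatrix ι) *ᵥ
            fun i => (P ^ t *ᵥ p) i - 1 / Fintype.card ι) i ^ 2 := by
          rw [← h_step, pow_succ', mulVec_mulVec]
      _ ≤ r * ∑ i, ((P ^ t *ᵥ p) i - 1 / Fintype.card ι) ^ 2 := h _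
      _ ≤ r * (r ^ t * ∑ i, (p i - 1 / Fintype.card ι) ^ 2) := by gcongr
      _ = r ^ (t + 1) * ∑ i, (p i - 1 / Fintype.card ι) ^ 2 := by ring

end DoublyStochastic

section TotalVariation

variable {n : ℕ}

lemma tvFromUniform_le_sqrt (p : Fin n → ℝ) :
    tvFromUniform p ≤ √(n * ∑ i, (p i - 1 / (n : ℝ)) ^ 2) / 2 := by
  have h_cauchy : ∑ i, |p i - 1 / (n : ℝ)| ≤ √(n * ∑ i, (p i - 1 / (n : ℝ)) ^ 2) := by
    refine Real.le_sqrt_of_sq_le (sq_sum_le_card_mul_sum_sq.trans_eq ?_)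
    simp only [card_univ, Fintype.card_fin, sq_abs]
  rw [tvFromUniform]
  linarith

lemma IsProbDist.sum_sq_sub_uniform_le_one {p : Fin n → ℝ} (hp : IsProbDist p) :
    ∑ i, (p i - 1 / (n : ℝ)) ^ 2 ≤ 1 := by
  have h_sq : ∑ i, p i ^ 2 ≤ 1 := by
    simpa only [hp.2, one_pow] using sum_sq_le_sq_sum_of_nonneg fun i (_ : i ∈ univ) => hp.1 i
  have h_expand : ∑ i, (p i - 1 / (n : ℝ)) ^ 2 = ∑ i, p i ^ 2 - 2 / n + n * (1 / n) ^ 2 := by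
    simp only [sub_sq, sum_add_distrib, sum_sub_distrib, ← sum_mul, ← mul_sum, hp.2, sum_const,
      card_univ, Fintype.card_fin, nsmul_eq_mul]
    ring
  have h_mean : (n : ℝ) * (1 / n) ^ 2 ≤ 2 / n := by
    calc (n : ℝ) * (1 / n) ^ 2 = n / n * (1 / n) := by ring
      _ * (1 / n) ≤ 1 * (1 / n) := by gcongr; exact div_self_le_one _
      _ ≤ 2 / n := by rw [one_mul]; gcongr; norm_num
  linarith

end TotalVariation

section RandomWalk

open Matrix

variable {n d : ℕ} {G : SimpleGraph (Fin n)} [DecidableRel G.Adj] {α : ℝ}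

lemma walkMatrix_mem_doublyStochastic (hG : G.IsRegularOfDegree d) (hd : d ≠ 0) :
    walkMatrix G d ∈ doublyStochastic ℝ (Fin n) := by
  have h_row : walkMatrix G d *ᵥ 1 = 1 := by
    ext i
    have h_adj : (G.adjMatrix ℝ *ᵥ 1) i = d * 1 :=
      SimpleGraph.adjMatrix_mulVec_const_apply_of_regular hG
    simp [walkMatrix, smul_mulVec, h_adj, hd]
  have h_symm : (walkMatrix G d)ᵀ = walkMatrix G d := by
    rw [walkMatrix, transpose_smul, SimpleGraph.transpose_adjMatrix]
  refine mem_doublyStochastic.2 ⟨fun i j => ?_, h_row, ?_⟩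
  · simp only [walkMatrix, Matrix.smul_apply, SimpleGraph.adjMatrix_apply, smul_eq_mul]
    positivity
  · rw [← mulVec_transpose, h_symm, h_row]

lemma blockSum_walkMatrix (S T : Finset (Fin n)) :
    blockSum (walkMatrix G d) S T = bipCount G S T / d := by
  rw [bipCount, card_filter, sum_product]
  push_cast
  simp only [blockSum, walkMatrix, Matrix.smul_apply, SimpleGraph.adjMatrix_apply, smul_eq_mul,
    ← mul_sum]
  ring

lemma BipDensity.blockSum_walkMatrix_le (hB : BipDensity G d α) (hd : d ≠ 0)
    (S T : Finset (Fin n)) :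
    blockSum (walkMatrix G d) S T ≤ #S * #T / n + α / d * √(#S * #T) := by
  have hd' : (0 : ℝ) < d := by exact_mod_cast hd.bot_lt
  rw [blockSum_walkMatrix, div_le_iff₀ hd']
  refine (hB S T).trans_eq ?_
  field_simp

variable {r : ℝ}

lemma dTV_le_sqrt (hG : G.IsRegularOfDegree d) (hd : d ≠ 0) (hr : 0 ≤ r)
    (h : ∀ v, ∑ i, ((walkMatrix G d - averagingMatrix (Fin n)) *ᵥ v) i ^ 2 ≤ r * ∑ i, v i ^ 2)
    (t : ℕ) : dTV G d t ≤ √(n * r ^ t) / 2 := by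
  refine Real.sSup_le ?_ (by positivity)
  rintro x ⟨p, hp, rfl⟩
  refine (tvFromUniform_le_sqrt _).trans ?_
  gcongr
  have h_contract :=
    sum_sq_pow_mulVec_sub_uniform_le (walkMatrix_mem_doublyStochastic hG hd) hr h hp.2 t
  rw [Fintype.card_fin] at h_contract
  exact h_contract.trans (mul_le_of_le_one_right (by positivity) hp.sum_sq_sub_uniform_le_one)

lemma mixingTime_le_ceil_logb (hn : n ≠ 0) (hG : G.IsRegularOfDegree d) (hd : d ≠ 0)
    (hr₀ : 0 < r) (hr₁ : r < 1)
    (h : ∀ v, ∑ i, ((walkMatrix G d - averagingMatrix (Fin n)) *ᵥ v) i ^ 2 ≤ r * ∑ i, v i ^ 2)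
    {ε : ℝ} (hε : 0 < ε) : mixingTime G d ε ≤ ⌈Real.logb r ((2 * ε) ^ 2 / n)⌉₊ := by
  refine Nat.sInf_le ((dTV_le_sqrt hG hd hr₀.le h _).trans ?_)
  have hn' : (0 : ℝ) < n := by exact_mod_cast hn.bot_lt
  have h_pow : r ^ ⌈Real.logb r ((2 * ε) ^ 2 / n)⌉₊ ≤ (2 * ε) ^ 2 / n := by
    rw [← Real.rpow_natCast, ← Real.logb_le_iff_le_rpow_of_base_lt_one hr₀ hr₁ (by positivity)]
    exact Nat.le_ceil _
  rw [div_le_iff₀ two_pos, mul_comm ε, Real.sqrt_le_left (by positivity)]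
  rwa [le_div_iff₀' hn'] at h_pow

lemma BipDensity.sum_sq_sub_averagingMatrix_mulVec_le (hB : BipDensity G d α)
    (hG : G.IsRegularOfDegree d) (hd : d ≠ 0) {δ : ℝ} (hδ₀ : 0 ≤ δ) (hδ₁ : δ ≤ 1)
    (hα : α / d = δ ^ 3) (hδn : δ ^ 3 * (2 * (1 + Real.log n)) ^ 2 ≤ 1) (v : Fin n → ℝ) :
    ∑ i, ((walkMatrix G d - averagingMatrix (Fin n)) *ᵥ v) i ^ 2 ≤ δ * ∑ i, v i ^ 2 := by
  have h_density (S T : Finset (Fin n)) : blockSum (walkMatrix G d) S T ≤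
      #S * #T / Fintype.card (Fin n) + δ ^ 3 * √(#S * #T) := by
    rw [Fintype.card_fin, ← hα]
    exact hB.blockSum_walkMatrix_le hd S T
  have h_norm := _root_.sum_sq_sub_averagingMatrix_mulVec_le
    (walkMatrix_mem_doublyStochastic hG hd) hδ₀ hδ₁ h_density v
  rw [Fintype.card_fin] at h_norm
  refine h_norm.trans ?_
  gcongr
  calc (2 * δ ^ 2 * (1 + Real.log n)) ^ 2 = δ * (δ ^ 3 * (2 * (1 + Real.log n)) ^ 2) := by ring
    _ ≤ δ := mul_le_of_le_one_right hδ₀ hδn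

end RandomWalk

section Estimates

lemma logb_le_nine_mul_log_div_log {n : ℕ} (hn : n ≠ 0) {δ x : ℝ} (hδ₀ : 0 < δ) (hδ₁ : δ < 1)
    (hx : δ ^ 3 = x⁻¹) :
    Real.logb δ ((2 * (1 / n)) ^ 2 / n) ≤ 9 * (Real.log n / Real.log x) := by
  have : (0 : ℝ) < n := by exact_mod_cast hn.bot_lt
  have h_le : ((n : ℝ) ^ 3)⁻¹ ≤ (2 * (1 / n)) ^ 2 / n := by
    calc ((n : ℝ) ^ 3)⁻¹ ≤ 4 * ((n : ℝ) ^ 3)⁻¹ :=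
          le_mul_of_one_le_left (by positivity) (by norm_num)
      _ = (2 * (1 / n)) ^ 2 / n := by field_simp; norm_num
  have h_log : Real.log x = -(3 * Real.log δ) := by
    rw [← inv_inv x, ← hx, Real.log_inv, Real.log_pow, Nat.cast_ofNat]
  calc Real.logb δ ((2 * (1 / n)) ^ 2 / n) ≤ Real.logb δ ((n : ℝ) ^ 3)⁻¹ :=
        (Real.logb_le_logb_of_base_lt_one hδ₀ hδ₁ (by positivity) (by positivity)).2 h_le
    _ = 9 * (Real.log n / Real.log x) := by
        rw [Real.logb, Real.log_inv, Real.log_pow, h_log]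
        have h_log_ne := (Real.log_neg hδ₀ hδ₁).ne
        field_simp
        ring

lemma one_add_log_le_three_mul_log {x : ℝ} (hx : 2 ≤ x) : 1 + Real.log x ≤ 3 * Real.log x := by
  have h_log_two := Real.log_le_log two_pos hx
  linarith [Real.log_two_gt_d9]

lemma one_le_log_div_log_div {x y a : ℝ} (ha : 1 ≤ a) (hay : a < y) (hyx : y ≤ x) :
    1 ≤ Real.log x / Real.log (y / a) := by
  have ha₀ : 0 < a := one_pos.trans_le ha
  have hy₀ : 0 < y := ha₀.trans hay
  rw [one_le_div (Real.log_pos ((one_lt_div ha₀).2 hay))]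
  exact Real.log_le_log (by positivity) ((div_le_self hy₀.le ha).trans hyx)

lemma ceil_nine_mul_le_ten_mul_sq {x : ℝ} (hx : 1 ≤ x) : (⌈9 * x⌉₊ : ℝ) ≤ 10 * x ^ 2 := by
  have h_ceil := Nat.ceil_lt_add_one (show 0 ≤ 9 * x by linarith)
  nlinarith

lemma lt_of_mul_sq_one_add_log_le {n : ℕ} {α x : ℝ} (hα : 0 < α)
    (h : α * (2 * (1 + Real.log n)) ^ 2 ≤ x) : α < x := by
  have h_log := Real.log_natCast_nonneg n
  refine lt_of_lt_of_le (lt_mul_of_one_lt_right hα ?_) h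
  exact one_lt_pow₀ (by linarith) two_ne_zero

lemma mul_sq_one_add_log_le_of_le_div {ξ α x d : ℝ} (hξ : 0 < ξ) (hα : 0 ≤ α) (hx : 2 ≤ x)
    (hd : d = x ^ ξ) (h : α ≤ d / ((6 / ξ) ^ 2 * Real.log d ^ 2)) :
    α * (2 * (1 + Real.log x)) ^ 2 ≤ d := by
  have h_log : 0 < Real.log x := Real.log_pos (by linarith)
  have h_denom : (6 / ξ) ^ 2 * Real.log d ^ 2 = (2 * (3 * Real.log x)) ^ 2 := by
    rw [hd, Real.log_rpow (by linarith)]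
    field_simp
    norm_num
  rw [h_denom, le_div_iff₀ (by positivity)] at h
  refine le_trans ?_ h
  gcongr
  exact one_add_log_le_three_mul_log hx

end Estimates

lemma lt_card_of_isRegularOfDegree {V : Type*} [Fintype V] [Nonempty V] {G : SimpleGraph V}
    [DecidableRel G.Adj] {d : ℕ} (hG : G.IsRegularOfDegree d) : d < Fintype.card V := by
  obtain ⟨v⟩ := ‹Nonempty V›
  simpa only [hG.degree_eq] using G.degree_lt_card_verts v

theorem mixing_time_upper_bound_of_bipartite_density_general {n d : ℕ} {G : SimpleGraph (Fin n)}
    [DecidableRel G.Adj] {α : ℝ} (hn : n ≠ 0) (hG : G.IsRegularOfDegree d) (hα : 0 < α)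
    (hαd : α * (2 * (1 + Real.log n)) ^ 2 ≤ d) (hB : BipDensity G d α) :
    mixingTime G d (1 / n) ≤ ⌈9 * (Real.log n / Real.log (d / α))⌉₊ := by
  have h_lt : α < d := lt_of_mul_sq_one_add_log_le hα hαd
  have hd₀ : (0 : ℝ) < d := hα.trans h_lt
  have hd : d ≠ 0 := by exact_mod_cast hd₀.ne'
  have hn₀ : (0 : ℝ) < n := by exact_mod_cast hn.bot_lt
  obtain ⟨δ, hδ₀, hδ⟩ : ∃ δ : ℝ, 0 < δ ∧ δ ^ 3 = α / d :=
    ⟨(α / d) ^ ((3 : ℕ) : ℝ)⁻¹, by positivity,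
      Real.rpow_inv_natCast_pow (by positivity) three_ne_zero⟩
  have hδ₁ : δ < 1 :=
    (pow_lt_one_iff_of_nonneg hδ₀.le three_ne_zero).1 (hδ ▸ (div_lt_one hd₀).2 h_lt)
  have hδn : δ ^ 3 * (2 * (1 + Real.log n)) ^ 2 ≤ 1 := by
    rwa [hδ, div_mul_eq_mul_div, div_le_one hd₀]
  have h_contract := hB.sum_sq_sub_averagingMatrix_mulVec_le hG hd hδ₀.le hδ₁.le hδ.symm hδn
  refine (mixingTime_le_ceil_logb hn hG hd hδ₀ hδ₁ h_contract (one_div_pos.2 hn₀)).trans ?_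
  exact Nat.ceil_mono (logb_le_nine_mul_log_div_log hn hδ₀ hδ₁ (by rw [hδ, inv_div]))

/-- bipartite density implies `τ_{1/n}(P) ≲ (log n / log(d/α))²`. -/
theorem mixing_time_upper_bound_of_bipartite_density (ξ : ℝ) (hξ0 : 0 < ξ) (hξ1 : ξ ≤ 1) :
    ∃ C₀ C₁ : ℝ, 0 < C₀ ∧ 0 < C₁ ∧
      ∀ (n d : ℕ) (G : SimpleGraph (Fin n)) [DecidableRel G.Adj] (α : ℝ),
        G.IsRegularOfDegree d →
        (d : ℝ) = (n : ℝ) ^ ξ →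
        Real.sqrt d < α → α ≤ d →
        α ≤ d / (C₀ * Real.log d ^ 2) →
        BipDensity G d α →
        (mixingTime G d (1 / n) : ℝ) ≤ C₁ * (Real.log n / Real.log (d / α)) ^ 2 := by
  refine ⟨(6 / ξ) ^ 2, 10, by positivity, by norm_num, ?_⟩
  intro n d G _ α hG hd hα hαd hα_le hB
  have hα₀ : 0 < α := (Real.sqrt_nonneg _).trans_lt hα
  have hd₀ : (0 : ℝ) < d := hα₀.trans_le hαd
  have hn : n ≠ 0 := by
    rintro rfl
    rw [hd, Nat.cast_zero, Real.zero_rpow hξ0.ne'] at hd₀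
    exact hd₀.false
  have : NeZero n := ⟨hn⟩
  have hd₁ : 1 ≤ d := by exact_mod_cast hd₀
  have hdn : d < n := by simpa only [Fintype.card_fin] using lt_card_of_isRegularOfDegree hG
  have hn₂ : (2 : ℝ) ≤ n := by exact_mod_cast hd₁.trans_lt hdn
  have hα₁ : 1 ≤ α := (Real.one_le_sqrt.2 (by exact_mod_cast hd₁)).trans hα.le
  have h_log := mul_sq_one_add_log_le_of_le_div hξ0 hα₀.le hn₂ hd hα_le
  calc (mixingTime G d (1 / n) : ℝ) ≤ (⌈9 * (Real.log n / Real.log (d / α))⌉₊ : ℝ) := by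
        exact_mod_cast mixing_time_upper_bound_of_bipartite_density_general hn hG hα₀ h_log hB
    _ ≤ 10 * (Real.log n / Real.log (d / α)) ^ 2 :=
        ceil_nine_mul_le_ten_mul_sq <| one_le_log_div_log_div hα₁
          (lt_of_mul_sq_one_add_log_le hα₀ h_log) (by exact_mod_cast hdn.le)
end

section
/- Let ξ ∈ (0,1] be a constant. There exist constants C₀, C₁ > 0 (depending only on ξ) such that the following holds: if G is a d-regular graph on n vertices with d = n^ξ, and G satisfies the δ-small-set α-bipartite density condition for some α ∈ (√d, d] with α ≤ d/(C₀·(log d)²) and some δ ∈ (0,1] with δ ≥ C₀·α/d, then, setting c := 1 − (log α)/(log d) (so that α = d^{1−c}), for every integer t ≥ 4/(c·ξ) + 1 one has d_TV(t) ≤ (1/4)·√(1−δ) + C₁ / n^{cξ/8}. -/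
open Finset

open scoped BigOperators Matrix

/-!
Write `ε = α / d` and `m = ⌊δ n⌋`. Since averaging over subsets extends the density condition to
blocks of arbitrary size, the sum of the entries of `P` over `S × T` is at most
`|S| |T| / n + ε (|S| / √(min |S| m)) (|T| / √(min |T| m))`. Sorting the values of `f, g ≥ 0` in
decreasing order and summing by parts in each variable gives
`⟨f, P g⟩ ≤ (∑ f) (∑ g) / n + ε Φ f Φ g`, where
`Φ f = ∑ f_k / √(min k m) ≤ √(1 + log n) ‖f‖₂ + ‖f‖₁ / √m`. For `g` a probability distribution and
`f = P g` this is an affine recursion for the `L²(π)`-norm of the density along the walk, with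
contraction factor at most `ε ^ (1 / 4)` and a fixed point `1 + O(ε ^ (1 / 4) + ε / δ)`.
Cauchy–Schwarz turns this into a bound `O(√(ε ^ (1 / 4) + ε / δ))` for the total variation distance,
in which `ε / δ` is absorbed by `ε ^ (1 / 4)` if `δ ≥ 1 / 2` and by `√(1 - δ)` if `δ ≤ 1 / 2`.
-/

section Averages

variable {ι : Type*} {s : Finset ι} {w : ι → ℝ}

theorem expect_le_expect_of_insert_le [DecidableEq ι] {a : ι} (hs : s.Nonempty) (ha : a ∉ s)
    (hw : ∀ i ∈ s, w a ≤ w i) : 𝔼 i ∈ insert a s, w i ≤ 𝔼 i ∈ s, w i := by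
  refine le_of_mul_le_mul_left ?_ (Nat.cast_pos.2 (insert_nonempty a s).card_pos : (0 : ℝ) < _)
  rw [card_mul_expect, sum_insert ha, card_insert_of_notMem ha, Nat.cast_succ, add_one_mul,
    card_mul_expect, add_comm]
  gcongr
  exact le_expect hs hw

/-- Iteratively discarding an element of minimal weight never lowers the average. -/
theorem exists_subset_card_eq_expect_le {k : ℕ} (hk : 0 < k) (hks : k ≤ #s) :
    ∃ t ⊆ s, #t = k ∧ 𝔼 i ∈ s, w i ≤ 𝔼 i ∈ t, w i := by
  classical
  refine Nat.decreasingInduction' (fun j _ hkj ⟨t, hts, ht, hle⟩ => ?_) hks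
    ⟨s, Subset.rfl, rfl, le_rfl⟩
  obtain ⟨a, ha, hmin⟩ := t.exists_min_image w (card_pos.1 (by omega))
  have hcard : #(t.erase a) = j := by rw [card_erase_of_mem ha, ht, Nat.add_sub_cancel]
  refine ⟨t.erase a, (erase_subset a t).trans hts, hcard, hle.trans ?_⟩
  conv_lhs => rw [← insert_erase ha]
  exact expect_le_expect_of_insert_le (card_pos.1 (by omega)) (notMem_erase a t)
    fun i hi => hmin i (mem_of_mem_erase hi)

end Averages

section SmallBlocks

variable {ι κ : Type*} {M : ι → κ → ℝ} {m : ℕ} {a b : ℝ}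

/-- The density condition for real matrices: every block of `M` with at most `m` rows and at most
`m` columns has entry sum at most `a` times its area plus `b` times the square root of its area. -/
def HasSmallBlockBound (M : ι → κ → ℝ) (m : ℕ) (a b : ℝ) : Prop :=
  ∀ (S : Finset ι) (T : Finset κ), #S ≤ m → #T ≤ m →
    ∑ u ∈ S, ∑ v ∈ T, M u v ≤ a * (#S * #T) + b * √(#S * #T)

theorem sum_sum_eq_card_mul_card_mul_expect (M : ι → κ → ℝ) (S : Finset ι) (T : Finset κ) :
    ∑ u ∈ S, ∑ v ∈ T, M u v = #S * #T * 𝔼 u ∈ S, 𝔼 v ∈ T, M u v := by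
  simp only [mul_assoc, mul_left_comm (#S : ℝ) (#T : ℝ), card_mul_expect, mul_sum]

theorem exists_expect_expect_le {S : Finset ι} {T : Finset κ} {k l : ℕ} (hk : 0 < k) (hkS : k ≤ #S)
    (hl : 0 < l) (hlT : l ≤ #T) (M : ι → κ → ℝ) :
    ∃ S' ⊆ S, ∃ T' ⊆ T, #S' = k ∧ #T' = l ∧
      𝔼 u ∈ S, 𝔼 v ∈ T, M u v ≤ 𝔼 u ∈ S', 𝔼 v ∈ T', M u v := by
  obtain ⟨S', hSS', hS', hle⟩ :=
    exists_subset_card_eq_expect_le (w := fun u => 𝔼 v ∈ T, M u v) hk hkS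
  obtain ⟨T', hTT', hT', hle'⟩ :=
    exists_subset_card_eq_expect_le (w := fun v => 𝔼 u ∈ S', M u v) hl hlT
  refine ⟨S', hSS', T', hTT', hS', hT', hle.trans ?_⟩
  rwa [expect_comm, expect_comm S']

theorem HasSmallBlockBound.expect_expect_le (h : HasSmallBlockBound M m a b) {S : Finset ι}
    {T : Finset κ} (hS : 0 < #S) (hSm : #S ≤ m) (hT : 0 < #T) (hTm : #T ≤ m) :
    𝔼 u ∈ S, 𝔼 v ∈ T, M u v ≤ a + b / (√(#S) * √(#T)) := by
  have hS' : (0 : ℝ) < #S := Nat.cast_pos.2 hS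
  have hT' : (0 : ℝ) < #T := Nat.cast_pos.2 hT
  refine le_of_mul_le_mul_left ?_ (mul_pos hS' hT')
  calc #S * #T * 𝔼 u ∈ S, 𝔼 v ∈ T, M u v = ∑ u ∈ S, ∑ v ∈ T, M u v :=
        (sum_sum_eq_card_mul_card_mul_expect M S T).symm
    _ ≤ a * (#S * #T) + b * √(#S * #T) := h S T hSm hTm
    _ = #S * #T * a + b * (#S / √(#S) * (#T / √(#T))) := by
        rw [Real.sqrt_mul hS'.le, Real.div_sqrt, Real.div_sqrt, mul_comm a]
    _ = #S * #T * (a + b / (√(#S) * √(#T))) := by ring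

theorem HasSmallBlockBound.sum_sum_le (h : HasSmallBlockBound M m a b) (hm : 0 < m)
    (S : Finset ι) (T : Finset κ) :
    ∑ u ∈ S, ∑ v ∈ T, M u v ≤
      a * (#S * #T) + b * (#S / √(min #S m : ℕ) * (#T / √(min #T m : ℕ))) := by
  rcases S.eq_empty_or_nonempty with rfl | hS
  · simp
  rcases T.eq_empty_or_nonempty with rfl | hT
  · simp
  have hS' : 0 < min #S m := lt_min hS.card_pos hm
  have hT' : 0 < min #T m := lt_min hT.card_pos hm
  obtain ⟨S', -, T', -, hkS, hkT, hle⟩ :=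
    exists_expect_expect_le hS' (min_le_left _ _) hT' (min_le_left _ _) M
  have hsmall := h.expect_expect_le (hkS ▸ hS') (hkS ▸ min_le_right _ _) (hkT ▸ hT')
    (hkT ▸ min_le_right _ _)
  rw [hkS, hkT] at hsmall
  calc ∑ u ∈ S, ∑ v ∈ T, M u v = #S * #T * 𝔼 u ∈ S, 𝔼 v ∈ T, M u v :=
        sum_sum_eq_card_mul_card_mul_expect M S T
    _ ≤ #S * #T * (a + b / (√(min #S m : ℕ) * √(min #T m : ℕ))) := by
        gcongr
        exact hle.trans hsmall
    _ = _ := by ring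

end SmallBlocks

section Rearrangement

theorem sum_mul_nonneg_of_prefix_sums_nonneg {ι : Type*} [LinearOrder ι] {s : Finset ι}
    {f h : ι → ℝ} (hf : AntitoneOn f s) (hf0 : ∀ i ∈ s, 0 ≤ f i)
    (hh : ∀ k ∈ s, 0 ≤ ∑ i ∈ s with i ≤ k, h i) : 0 ≤ ∑ i ∈ s, f i * h i := by
  suffices H : ∀ c, (∀ i ∈ s, c ≤ f i) → c * ∑ i ∈ s, h i ≤ ∑ i ∈ s, f i * h i by
    simpa using H 0 hf0
  clear hf0
  induction s using Finset.induction_on_max with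
  | empty => simp
  | insert a s has ih =>
    intro c hc
    have ha : a ∉ s := fun hmem => (has a hmem).false
    have hprefix : ∀ k ∈ s, 0 ≤ ∑ i ∈ s with i ≤ k, h i := fun k hk => by
      simpa [filter_insert, (has k hk).not_ge] using hh k (mem_insert_of_mem hk)
    have htotal : 0 ≤ ∑ i ∈ insert a s, h i := by
      have hle : ∀ i ∈ insert a s, i ≤ a :=
        forall_mem_insert _ _ _ |>.2 ⟨le_rfl, fun i hi => (has i hi).le⟩
      simpa only [filter_true_of_mem hle] using hh a (mem_insert_self a s)
    have hs : f a * ∑ i ∈ s, h i ≤ ∑ i ∈ s, f i * h i :=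
      ih (hf.mono (by simp)) hprefix (f a) fun i hi =>
        hf (by simp [hi]) (by simp) (has i hi).le
    calc c * ∑ i ∈ insert a s, h i ≤ f a * ∑ i ∈ insert a s, h i :=
          mul_le_mul_of_nonneg_right (hc a (mem_insert_self a s)) htotal
      _ = f a * h a + f a * ∑ i ∈ s, h i := by rw [sum_insert ha, mul_add]
      _ ≤ f a * h a + ∑ i ∈ s, f i * h i := by gcongr
      _ = ∑ i ∈ insert a s, f i * h i := by rw [sum_insert ha]

theorem sum_mul_le_sum_mul_of_prefix_sums_le {N : ℕ} {f g h : Fin N → ℝ} (hf : Antitone f)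
    (hf0 : ∀ i, 0 ≤ f i) (hgh : ∀ k, ∑ i ≤ k, g i ≤ ∑ i ≤ k, h i) :
    ∑ i, f i * g i ≤ ∑ i, f i * h i := by
  rw [← sub_nonneg, ← sum_sub_distrib]
  simp only [← mul_sub]
  refine sum_mul_nonneg_of_prefix_sums_nonneg (hf.antitoneOn _) (fun i _ => hf0 i) fun k _ => ?_
  rw [filter_ge_eq_Iic, sum_sub_distrib, sub_nonneg]
  exact hgh k

end Rearrangement

section Bilinear

/-- The weight given to the `k`-th largest value of a function (counting from `0`) in the bilinear
form of a block bound: the weight `1 / √(k + 1)` of the Lorentz norm `L^{2,1}`, kept constant once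
the rank `k + 1` exceeds the block size `m`. -/
noncomputable def rankWeight (m k : ℕ) : ℝ :=
  1 / √(min (k + 1) m : ℕ)

theorem rankWeight_nonneg (m k : ℕ) : 0 ≤ rankWeight m k := by
  unfold rankWeight
  positivity

theorem rankWeight_le_add (m k : ℕ) : rankWeight m k ≤ 1 / √((k : ℝ) + 1) + 1 / √m := by
  rcases le_total (k + 1) m with h | h
  · rw [rankWeight, min_eq_left h, Nat.cast_succ]
    exact le_add_of_nonneg_right (by positivity)
  · rw [rankWeight, min_eq_right h]
    exact le_add_of_nonneg_left (by positivity)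

theorem div_sqrt_min_le_sum_rankWeight {N m : ℕ} (hm : 0 < m) (k : Fin N) :
    (#(Iic k) : ℝ) / √(min #(Iic k) m : ℕ) ≤ ∑ i ≤ k, rankWeight m i := by
  rw [div_eq_mul_one_div, ← nsmul_eq_mul]
  refine card_nsmul_le_sum _ _ _ fun i hi => ?_
  have hik : (i : ℕ) + 1 ≤ #(Iic k) := by
    simpa using Fin.le_def.1 (mem_Iic.1 hi)
  have : 0 < min ((i : ℕ) + 1) m := lt_min i.1.succ_pos hm
  unfold rankWeight
  gcongr

theorem sum_mul_inv_sqrt_succ_le {N : ℕ} (f : Fin N → ℝ) :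
    ∑ i, f i * (1 / √((i : ℝ) + 1)) ≤ √(1 + Real.log N) * √(∑ i, f i ^ 2) := by
  have hharmonic : ∑ i : Fin N, (1 / √((i : ℝ) + 1)) ^ 2 ≤ 1 + Real.log N := by
    refine le_trans (le_of_eq ?_) (harmonic_le_one_add_log N)
    rw [harmonic, Fin.sum_univ_eq_sum_range (fun k => (1 / √((k : ℝ) + 1)) ^ 2)]
    push_cast
    refine sum_congr rfl fun k _ => ?_
    rw [div_pow, Real.sq_sqrt (by positivity), one_pow, one_div]
  calc ∑ i, f i * (1 / √((i : ℝ) + 1))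
      ≤ √(∑ i, f i ^ 2) * √(∑ i : Fin N, (1 / √((i : ℝ) + 1)) ^ 2) :=
        Real.sum_mul_le_sqrt_mul_sqrt _ _ _
    _ ≤ √(∑ i, f i ^ 2) * √(1 + Real.log N) := by gcongr
    _ = _ := mul_comm _ _

theorem sum_mul_rankWeight_le {N : ℕ} (m : ℕ) {f : Fin N → ℝ} (hf : ∀ i, 0 ≤ f i) :
    ∑ i, f i * rankWeight m i ≤ √(1 + Real.log N) * √(∑ i, f i ^ 2) + (∑ i, f i) / √m := by
  calc ∑ i, f i * rankWeight m i
      ≤ ∑ i, f i * (1 / √((i : ℝ) + 1) + 1 / √m) :=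
        sum_le_sum fun i _ => mul_le_mul_of_nonneg_left (rankWeight_le_add m i) (hf i)
    _ = ∑ i, f i * (1 / √((i : ℝ) + 1)) + (∑ i, f i) / √m := by
        simp only [mul_add, sum_add_distrib, mul_one_div, sum_div]
    _ ≤ _ := add_le_add_left (sum_mul_inv_sqrt_succ_le f) _

variable {m : ℕ} {a b : ℝ}

/-- On blocks of initial segments `M` is dominated by the kernel `a + b w u w v`, where `w` is the
rank weight, and two summations by parts carry this over to antitone functions. -/
theorem HasSmallBlockBound.sum_mul_sum_le_of_antitone {N K : ℕ} {M : Fin N → Fin K → ℝ}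
    (h : HasSmallBlockBound M m a b) (hm : 0 < m) (hb : 0 ≤ b) {f : Fin N → ℝ} {g : Fin K → ℝ}
    (hf : Antitone f) (hf0 : ∀ u, 0 ≤ f u) (hg : Antitone g) (hg0 : ∀ v, 0 ≤ g v) :
    ∑ u, f u * ∑ v, g v * M u v ≤ a * ((∑ u, f u) * ∑ v, g v) +
      b * ((∑ u, f u * rankWeight m u) * ∑ v, g v * rankWeight m v) := by
  have hblock : ∀ k l, ∑ v ≤ l, ∑ u ≤ k, M u v ≤
      ∑ v ≤ l, ∑ u ≤ k, (a + b * (rankWeight m u * rankWeight m v)) := fun k l => by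
    calc ∑ v ≤ l, ∑ u ≤ k, M u v
        ≤ a * (#(Iic k) * #(Iic l)) + b * (#(Iic k) / √(min #(Iic k) m : ℕ) *
            (#(Iic l) / √(min #(Iic l) m : ℕ))) := by
          rw [sum_comm]
          exact h.sum_sum_le hm _ _
      _ ≤ a * (#(Iic k) * #(Iic l)) +
            b * ((∑ u ≤ k, rankWeight m u) * ∑ v ≤ l, rankWeight m v) := by
          gcongr
          · exact sum_nonneg fun _ _ => rankWeight_nonneg _ _
          · exact div_sqrt_min_le_sum_rankWeight hm k
          · exact div_sqrt_min_le_sum_rankWeight hm l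
      _ = _ := by
          simp only [sum_add_distrib, sum_const, nsmul_eq_mul, ← mul_sum, ← sum_mul]
          ring
  have hrow : ∀ k, ∑ u ≤ k, ∑ v, g v * M u v ≤
      ∑ u ≤ k, ∑ v, g v * (a + b * (rankWeight m u * rankWeight m v)) := fun k => by
    rw [sum_comm, sum_comm (s := Iic k)]
    simp only [← mul_sum]
    exact sum_mul_le_sum_mul_of_prefix_sums_le hg hg0 (hblock k)
  refine (sum_mul_le_sum_mul_of_prefix_sums_le hf hf0 hrow).trans_eq ?_
  rw [sum_mul_sum, sum_mul_sum, mul_sum, mul_sum, ← sum_add_distrib]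
  refine sum_congr rfl fun u _ => ?_
  rw [mul_sum, mul_sum, mul_sum, ← sum_add_distrib]
  exact sum_congr rfl fun v _ => by ring

theorem exists_equiv_fin_antitone_comp {ι : Type*} [Fintype ι] (f : ι → ℝ) :
    ∃ e : Fin (Fintype.card ι) ≃ ι, Antitone (f ∘ e) :=
  let e := (Fintype.equivFin ι).symm
  ⟨(Tuple.sort (OrderDual.toDual ∘ f ∘ e)).trans e,
    monotone_toDual_comp_iff.1 (Tuple.monotone_sort (OrderDual.toDual ∘ f ∘ e))⟩

variable {ι κ : Type*} {M : ι → κ → ℝ}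

theorem HasSmallBlockBound.comp_embedding (h : HasSmallBlockBound M m a b) {ι' κ' : Type*}
    (e : ι' ↪ ι) (e' : κ' ↪ κ) : HasSmallBlockBound (fun u v => M (e u) (e' v)) m a b :=
  fun S T hS hT => by simpa using h (S.map e) (T.map e') (by simpa) (by simpa)

theorem HasSmallBlockBound.sum_mul_sum_le [Fintype ι] [Fintype κ]
    (h : HasSmallBlockBound M m a b) (hm : 0 < m) (hb : 0 ≤ b) {f : ι → ℝ} {g : κ → ℝ}
    (hf : ∀ u, 0 ≤ f u) (hg : ∀ v, 0 ≤ g v) :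
    ∑ u, f u * ∑ v, g v * M u v ≤ a * ((∑ u, f u) * ∑ v, g v) +
      b * ((√(1 + Real.log (Fintype.card ι)) * √(∑ u, f u ^ 2) + (∑ u, f u) / √m) *
        (√(1 + Real.log (Fintype.card κ)) * √(∑ v, g v ^ 2) + (∑ v, g v) / √m)) := by
  obtain ⟨e, he⟩ := exists_equiv_fin_antitone_comp f
  obtain ⟨e', he'⟩ := exists_equiv_fin_antitone_comp g
  have hfw := sum_mul_rankWeight_le m fun i => hf (e i)
  have hgw := sum_mul_rankWeight_le m fun i => hg (e' i)
  have hbil := (h.comp_embedding e.toEmbedding e'.toEmbedding).sum_mul_sum_le_of_antitone hm hb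
    he (fun i => hf (e i)) he' fun i => hg (e' i)
  simp only [Function.comp_apply, Equiv.coe_toEmbedding] at hbil
  simp only [← e.sum_comp, ← e'.sum_comp]
  refine hbil.trans ?_
  have hfsum : 0 ≤ ∑ i, f (e i) := sum_nonneg fun i _ => hf (e i)
  gcongr
  exact sum_nonneg fun i _ => mul_nonneg (hg (e' i)) (rankWeight_nonneg m i)

end Bilinear

section DensityNorm

variable {n : ℕ} {p : Fin n → ℝ}

/-- The norm of `p / π` in `L²(π)`, where `π` is the uniform distribution on `Fin n`. For a
probability distribution `p` its square is one more than the `χ²`-distance of `p` from `π`. -/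
noncomputable def densityNorm (p : Fin n → ℝ) : ℝ :=
  √(n * ∑ v, p v ^ 2)

theorem densityNorm_nonneg (p : Fin n → ℝ) : 0 ≤ densityNorm p :=
  Real.sqrt_nonneg _

theorem densityNorm_sq (p : Fin n → ℝ) : densityNorm p ^ 2 = n * ∑ v, p v ^ 2 :=
  Real.sq_sqrt (by positivity)

theorem IsProbDist.card_pos (hp : IsProbDist p) : 0 < n := by
  rcases n.eq_zero_or_pos with rfl | hn
  · simpa using hp.2
  · exact hn

theorem IsProbDist.one_le_densityNorm (hp : IsProbDist p) : 1 ≤ densityNorm p := by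
  refine Real.one_le_sqrt.2 ?_
  simpa [hp.2] using sq_sum_le_card_mul_sum_sq (s := univ) (f := p)

theorem IsProbDist.densityNorm_le_sqrt (hp : IsProbDist p) : densityNorm p ≤ √n := by
  refine Real.sqrt_le_sqrt (mul_le_of_le_one_right (by positivity) ?_)
  simpa [hp.2] using sum_sq_le_sq_sum_of_nonneg (s := univ) (f := p) fun v _ => hp.1 v

theorem IsProbDist.tvFromUniform_le (hp : IsProbDist p) :
    tvFromUniform p ≤ 1 / 2 * √(densityNorm p ^ 2 - 1) := by
  have hn : (n : ℝ) ≠ 0 := Nat.cast_ne_zero.2 hp.card_pos.ne'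
  refine mul_le_mul_of_nonneg_left (Real.le_sqrt_of_sq_le ?_) (by norm_num)
  calc (∑ v, |p v - 1 / (n : ℝ)|) ^ 2 ≤ n * ∑ v, (p v - 1 / (n : ℝ)) ^ 2 := by
        simpa using sq_sum_le_card_mul_sum_sq (s := univ) (f := fun v => |p v - 1 / (n : ℝ)|)
    _ = densityNorm p ^ 2 - 1 := by
        simp only [densityNorm_sq, sub_sq, sum_add_distrib, sum_sub_distrib, ← sum_mul, ← mul_sum,
          hp.2, card_univ, Fintype.card_fin, sum_const, nsmul_eq_mul]
        field_simp
        ring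

end DensityNorm

theorem le_div_one_sub_add_pow_mul_of_le_affine {x : ℕ → ℝ} {a b : ℝ} (ha : 0 ≤ a) (hb : 0 ≤ b)
    (hb1 : b < 1) (hx : ∀ s, x (s + 1) ≤ a + b * x s) (t : ℕ) :
    x t ≤ a / (1 - b) + b ^ t * x 0 := by
  have hb1' : 0 < 1 - b := sub_pos.2 hb1
  have hfix : a + b * (a / (1 - b)) = a / (1 - b) := by
    field_simp
    ring
  rw [← sub_le_iff_le_add']
  calc x t - a / (1 - b) ≤ b ^ t * (x 0 - a / (1 - b)) :=
        le_geom (u := fun s => x s - a / (1 - b)) hb t fun s _ => by linarith [hx s]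
    _ ≤ b ^ t * x 0 := by
        gcongr
        exact sub_le_self _ (by positivity)

section StochasticMatrix

variable {n m : ℕ} {M : Matrix (Fin n) (Fin n) ℝ} {ε : ℝ} {p : Fin n → ℝ}

theorem IsProbDist.mulVec (hp : IsProbDist p) (hM : M ∈ Matrix.colStochastic ℝ (Fin n)) :
    IsProbDist (M *ᵥ p) :=
  ⟨Matrix.nonneg_mulVec_of_mem_colStochastic hM hp.1,
    (Matrix.sum_mulVec_of_mem_colStochastic hM).trans hp.2⟩

theorem IsProbDist.densityNorm_mulVec_sq_le (hp : IsProbDist p)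
    (hM : M ∈ Matrix.colStochastic ℝ (Fin n)) (h : HasSmallBlockBound M m (1 / n) ε) (hm : 0 < m)
    (hε : 0 ≤ ε) :
    densityNorm (M *ᵥ p) ^ 2 ≤
      1 + ε * ((√(1 + Real.log n) * densityNorm (M *ᵥ p) + √(n / m)) *
        (√(1 + Real.log n) * densityNorm p + √(n / m))) := by
  have hp' := hp.mulVec hM
  have hn : (0 : ℝ) < n := Nat.cast_pos.2 hp.card_pos
  have hbil := h.sum_mul_sum_le hm hε hp'.1 hp.1
  rw [hp'.2, hp.2, Fintype.card_fin] at hbil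
  have hlhs : ∑ u, (M *ᵥ p) u * ∑ v, p v * M u v = ∑ u, (M *ᵥ p) u ^ 2 :=
    sum_congr rfl fun u _ => by simp only [sq, Matrix.mulVec, dotProduct, mul_comm (p _)]
  rw [hlhs] at hbil
  rw [densityNorm_sq]
  refine (mul_le_mul_of_nonneg_left hbil hn.le).trans_eq ?_
  simp only [densityNorm, Real.sqrt_mul hn.le, Real.sqrt_div hn.le]
  field_simp
  rw [Real.sq_sqrt hn.le]
  ring

/-- As `1 ≤ densityNorm (M *ᵥ p)`, the quadratic bound may be divided by `densityNorm (M *ᵥ p)`. -/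
theorem IsProbDist.densityNorm_mulVec_le (hp : IsProbDist p)
    (hM : M ∈ Matrix.colStochastic ℝ (Fin n)) (h : HasSmallBlockBound M m (1 / n) ε) (hm : 0 < m)
    (hε : 0 ≤ ε) :
    densityNorm (M *ᵥ p) ≤
      1 + ε * ((√(1 + Real.log n) + √(n / m)) *
        (√(1 + Real.log n) * densityNorm p + √(n / m))) := by
  have hsq := hp.densityNorm_mulVec_sq_le hM h hm hε
  have hone := (hp.mulVec hM).one_le_densityNorm
  have hp0 := densityNorm_nonneg p
  set N := densityNorm (M *ᵥ p)
  refine le_of_mul_le_mul_left ?_ (zero_lt_one.trans_le hone)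
  calc N * N = N ^ 2 := (sq N).symm
    _ ≤ 1 + ε * ((√(1 + Real.log n) * N + √(n / m)) *
          (√(1 + Real.log n) * densityNorm p + √(n / m))) := hsq
    _ ≤ N + ε * ((√(1 + Real.log n) * N + √(n / m) * N) *
          (√(1 + Real.log n) * densityNorm p + √(n / m))) := by
        gcongr
        exact le_mul_of_one_le_right (Real.sqrt_nonneg _) hone
    _ = _ := by ring

variable {u r : ℝ}

theorem IsProbDist.densityNorm_pow_mulVec_le (hp : IsProbDist p)
    (hM : M ∈ Matrix.colStochastic ℝ (Fin n)) (h : HasSmallBlockBound M m (1 / n) ε) (hm : 0 < m)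
    (hε : 0 ≤ ε) (hu : 0 ≤ u) (hu1 : u ≤ 1) (hr : 0 ≤ r)
    (hll : ε * (1 + Real.log n) ≤ u / 8) (hlw : ε * (√(1 + Real.log n) * √(n / m)) ≤ u / 8)
    (hww : ε * (n / m) ≤ 2 * r) (t : ℕ) :
    densityNorm (M ^ t *ᵥ p) ≤ 1 + u + 3 * r + u ^ t * √n := by
  set l := √(1 + Real.log n)
  set w := √(n / m : ℝ)
  have hl : l ^ 2 = 1 + Real.log n := Real.sq_sqrt (by positivity)
  have hw : w ^ 2 = n / m := Real.sq_sqrt (by positivity)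
  set a := 1 + ε * ((l + w) * w) with ha
  set b := ε * ((l + w) * l) with hb
  have hale : a ≤ 1 + u / 8 + 2 * r := by rw [← hw] at hww; linarith
  have hble : b ≤ u / 4 := by rw [← hl] at hll; linarith
  have hlimit : a / (1 - b) ≤ 1 + u + 3 * r := by
    rw [div_le_iff₀ (by linarith)]
    nlinarith [mul_nonneg hu hr]
  have hstep : ∀ s, densityNorm (M ^ (s + 1) *ᵥ p) ≤ a + b * densityNorm (M ^ s *ᵥ p) := fun s => by
    rw [pow_succ', ← Matrix.mulVec_mulVec]
    refine ((hp.mulVec (pow_mem hM s)).densityNorm_mulVec_le hM h hm hε).trans_eq ?_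
    ring
  calc densityNorm (M ^ t *ᵥ p) ≤ a / (1 - b) + b ^ t * densityNorm (M ^ 0 *ᵥ p) :=
        le_div_one_sub_add_pow_mul_of_le_affine (x := fun s => densityNorm (M ^ s *ᵥ p))
          (by positivity) (by positivity) (by linarith) hstep t
    _ = a / (1 - b) + b ^ t * densityNorm p := by rw [pow_zero, Matrix.one_mulVec]
    _ ≤ 1 + u + 3 * r + u ^ t * √n := by
        gcongr
        · exact densityNorm_nonneg p
        · linarith
        · exact hp.densityNorm_le_sqrt

theorem IsProbDist.tvFromUniform_le_two_mul_sqrt (hp : IsProbDist p) (hu : 0 ≤ u) (hu1 : u ≤ 1)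
    (hr : 0 ≤ r) (hr8 : r ≤ 1 / 8) (hpur : densityNorm p ≤ 1 + 2 * u + 3 * r) :
    tvFromUniform p ≤ 2 * √(u + r) := by
  have hsq : densityNorm p ^ 2 - 1 ≤ 4 ^ 2 * (u + r) := by
    have := pow_le_pow_left₀ (densityNorm_nonneg p) hpur 2
    nlinarith
  calc tvFromUniform p ≤ 1 / 2 * √(densityNorm p ^ 2 - 1) := hp.tvFromUniform_le
    _ ≤ 1 / 2 * √(4 ^ 2 * (u + r)) := by gcongr
    _ = 2 * √(u + r) := by
        rw [Real.sqrt_mul (by norm_num), Real.sqrt_sq (by norm_num)]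
        ring

end StochasticMatrix

section Parameters

variable {n : ℕ} {ε δ : ℝ}

theorem two_le_of_le_div_mul_log_sq {C x α : ℝ} (hα : 0 < α) (h : α ≤ x / (C * Real.log n ^ 2)) :
    2 ≤ n := by
  by_contra hn
  have hlog : Real.log n = 0 := by interval_cases n <;> simp
  simp only [hlog] at h
  norm_num at h
  linarith

theorem mul_one_add_log_le (hn : 2 ≤ n) (hε : 0 ≤ ε) (hlog : 32 ^ 2 * (ε * Real.log n ^ 2) ≤ 1) :
    ε * (1 + Real.log n) ≤ 3 / 32 * √ε := by
  have hlog2 : 1 / 2 ≤ Real.log n := by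
    have := Real.log_le_log two_pos (Nat.ofNat_le_cast.2 hn : (2 : ℝ) ≤ n)
    linarith [Real.log_two_gt_d9]
  have hsqrt : √ε * (32 * Real.log n) ≤ 1 := by
    refine (sq_le_one_iff₀ (by positivity)).1 (le_trans (le_of_eq ?_) hlog)
    rw [mul_pow, Real.sq_sqrt hε]
    ring
  calc ε * (1 + Real.log n) ≤ ε * (3 * Real.log n) := by gcongr; linarith
    _ = √ε * √ε * (3 * Real.log n) := by rw [Real.mul_self_sqrt hε]
    _ = 3 / 32 * √ε * (√ε * (32 * Real.log n)) := by ring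
    _ ≤ 3 / 32 * √ε := mul_le_of_le_one_right (by positivity) hsqrt

theorem natCast_div_floor_mul_le (hδ : 0 < δ) (hδn : 1 ≤ δ * n) :
    (n : ℝ) / ⌊δ * n⌋₊ ≤ 2 / δ := by
  have hfloor : (1 : ℝ) ≤ ⌊δ * n⌋₊ := Nat.one_le_cast.2 (Nat.floor_pos.2 hδn)
  rw [div_le_div_iff₀ (by linarith) hδ]
  linarith [Nat.lt_floor_add_one (δ * n)]

theorem rpow_logb_div {b x : ℝ} (hb : 0 < b) (hb1 : b ≠ 1) (hx : 0 < x) (c : ℝ) :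
    b ^ (Real.logb b x / c) = x ^ (1 / c) := by
  rw [div_eq_mul_one_div, Real.rpow_mul hb.le, Real.rpow_logb hb hb1 hx]

theorem rpow_pow_mul_sqrt_le {t : ℕ} (hn : 1 < n) (hε : 0 < ε) (hε1 : ε < 1)
    (ht : 4 / Real.logb n ε⁻¹ + 1 ≤ t) :
    (ε ^ (1 / 4 : ℝ)) ^ t * √n ≤ ε ^ (1 / 4 : ℝ) := by
  have hn1 : (1 : ℝ) < n := Nat.one_lt_cast.2 hn
  have hn0 : (0 : ℝ) < n := by linarith
  set κ := Real.logb n ε⁻¹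
  have hκ : 0 < κ := Real.logb_pos hn1 (one_lt_inv₀ hε |>.2 hε1)
  have hεκ : ε = (n : ℝ) ^ (-κ) := by
    rw [Real.rpow_neg hn0.le, Real.rpow_logb hn0 hn1.ne' (inv_pos.2 hε), inv_inv]
  have ht' : 4 ≤ κ * (t - 1) := by
    rw [mul_comm, ← div_le_iff₀ hκ]
    linarith
  rw [hεκ, ← Real.rpow_mul hn0.le, ← Real.rpow_mul_natCast hn0.le, Real.sqrt_eq_rpow,
    ← Real.rpow_add hn0]
  exact Real.rpow_le_rpow_of_exponent_le hn1.le (by linarith)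

theorem two_mul_sqrt_rpow_add_div_le (hε : 0 ≤ ε) (hε1 : ε ≤ 1) (hεδ : 32 ^ 2 * ε ≤ δ)
    (hδ : 0 < δ) :
    2 * √(ε ^ (1 / 4 : ℝ) + ε / δ) ≤ 1 / 4 * √(1 - δ) + 4 * ε ^ (1 / 8 : ℝ) := by
  set u := ε ^ (1 / 4 : ℝ) with hu
  have hu0 : 0 ≤ u := by positivity
  have hsqrt : ε ^ (1 / 8 : ℝ) = √u := by
    rw [hu, Real.sqrt_eq_rpow, ← Real.rpow_mul hε]
    norm_num
  rw [hsqrt]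
  rcases le_total (1 / 2) δ with hlarge | hsmall
  · have hεu : ε ≤ u := Real.self_le_rpow_of_le_one hε hε1 (by norm_num)
    have hr : ε / δ ≤ 3 * u := by
      rw [div_le_iff₀ hδ]
      nlinarith
    calc 2 * √(u + ε / δ) ≤ 2 * √(2 ^ 2 * u) := by gcongr; linarith
      _ = 4 * √u := by
          rw [Real.sqrt_mul (by norm_num), Real.sqrt_sq (by norm_num)]
          ring
      _ ≤ 1 / 4 * √(1 - δ) + 4 * √u := le_add_of_nonneg_left (by positivity)
  · have hr : √(ε / δ) ≤ 1 / 32 := by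
      refine Real.sqrt_le_iff.2 ⟨by norm_num, ?_⟩
      rw [div_le_iff₀ hδ]
      linarith
    have hδ' : 1 / 2 ≤ √(1 - δ) := Real.le_sqrt_of_sq_le (by linarith)
    have hadd : √(u + ε / δ) ≤ √u + √(ε / δ) := by
      simp only [Real.sqrt_eq_rpow]
      exact Real.rpow_add_le_add_rpow hu0 (by positivity) (by norm_num) (by norm_num)
    linarith [Real.sqrt_nonneg u]

end Parameters

theorem IsProbDist.tvFromUniform_pow_mulVec_le {n t : ℕ} {M : Matrix (Fin n) (Fin n) ℝ}
    {p : Fin n → ℝ} {ε δ : ℝ} (hp : IsProbDist p) (hM : M ∈ Matrix.colStochastic ℝ (Fin n))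
    (h : HasSmallBlockBound M ⌊δ * n⌋₊ (1 / n) ε) (hn : 2 ≤ n) (hε : 0 < ε)
    (hlog : 32 ^ 2 * (ε * Real.log n ^ 2) ≤ 1) (hεδ : 32 ^ 2 * ε ≤ δ) (hδ1 : δ ≤ 1)
    (hδn : 1 ≤ δ * n) (ht : 4 / Real.logb n ε⁻¹ + 1 ≤ t) :
    tvFromUniform (M ^ t *ᵥ p) ≤ 1 / 4 * √(1 - δ) + 4 * ε ^ (1 / 8 : ℝ) := by
  have hδ : 0 < δ := by linarith
  have hε1 : ε < 1 := by linarith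
  set u := ε ^ (1 / 4 : ℝ) with hu
  have hu0 : 0 ≤ u := by positivity
  have hu1 : u ≤ 1 := Real.rpow_le_one hε.le hε1.le (by norm_num)
  have hr : ε / δ ≤ 1 / 32 ^ 2 := by
    rw [div_le_div_iff₀ hδ (by norm_num)]
    linarith
  have hsqrt : √ε = u ^ 2 := by
    rw [hu, Real.sqrt_eq_rpow, ← Real.rpow_mul_natCast hε.le]
    norm_num
  have hll : ε * (1 + Real.log n) ≤ 3 / 32 * u ^ 2 := hsqrt ▸ mul_one_add_log_le hn hε.le hlog
  have hww : ε * (n / ⌊δ * n⌋₊ : ℝ) ≤ 2 * (ε / δ) := by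
    calc ε * (n / ⌊δ * n⌋₊ : ℝ) ≤ ε * (2 / δ) :=
          mul_le_mul_of_nonneg_left (natCast_div_floor_mul_le hδ hδn) hε.le
      _ = 2 * (ε / δ) := by ring
  have hlw : ε * (√(1 + Real.log n) * √(n / ⌊δ * n⌋₊)) ≤ u / 8 := by
    refine (pow_le_pow_iff_left₀ (by positivity) (by positivity) two_ne_zero).1 ?_
    calc (ε * (√(1 + Real.log n) * √(n / ⌊δ * n⌋₊))) ^ 2
        = (ε * (1 + Real.log n)) * (ε * (n / ⌊δ * n⌋₊)) := by
          rw [mul_pow, mul_pow, Real.sq_sqrt (by positivity), Real.sq_sqrt (by positivity)]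
          ring
      _ ≤ (3 / 32 * u ^ 2) * (2 * (1 / 32 ^ 2)) :=
          mul_le_mul hll (hww.trans (by linarith)) (by positivity) (by positivity)
      _ ≤ (u / 8) ^ 2 := by linarith [sq_nonneg u]
  have hnorm := hp.densityNorm_pow_mulVec_le hM h (Nat.floor_pos.2 hδn) hε.le hu0 hu1
    (by positivity) (by nlinarith) hlw hww t
  have hdecay : u ^ t * √n ≤ u := rpow_pow_mul_sqrt_le hn hε hε1 ht
  refine ((hp.mulVec (pow_mem hM t)).tvFromUniform_le_two_mul_sqrt (r := ε / δ) hu0 hu1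
    (by positivity) (by linarith) (by linarith)).trans ?_
  exact two_mul_sqrt_rpow_add_div_le hε.le hε1.le hεδ hδ

section RegularGraph

variable {n d : ℕ} {G : SimpleGraph (Fin n)} [DecidableRel G.Adj] {α δ : ℝ}

theorem walkMatrix_mem_colStochastic (hG : G.IsRegularOfDegree d) (hd : 0 < d) :
    walkMatrix G d ∈ Matrix.colStochastic ℝ (Fin n) := by
  refine ⟨fun u v => ?_, ?_⟩
  · rw [walkMatrix, Matrix.smul_apply, SimpleGraph.adjMatrix_apply]
    positivity
  · ext v
    have hcol : (1 ᵥ* G.adjMatrix ℝ) v = d := by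
      simp [hG.degree_eq v]
    rw [walkMatrix, Matrix.vecMul_smul, Pi.smul_apply, hcol]
    exact inv_mul_cancel₀ (by positivity)

theorem bipCount_eq_sum_adjMatrix (G : SimpleGraph (Fin n)) [DecidableRel G.Adj]
    (S T : Finset (Fin n)) : (bipCount G S T : ℝ) = ∑ u ∈ S, ∑ v ∈ T, G.adjMatrix ℝ u v := by
  simp only [SimpleGraph.adjMatrix_apply]
  rw [← sum_product' S T fun u v => if G.Adj u v then (1 : ℝ) else 0, sum_boole, bipCount]

theorem SmallSetBipDensity.hasSmallBlockBound (h : SmallSetBipDensity G d α δ) (hd : 0 < d)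
    (hδ : 0 ≤ δ) : HasSmallBlockBound (walkMatrix G d) ⌊δ * n⌋₊ (1 / n) (α / d) := by
  intro S T hS hT
  have hle : ∀ U : Finset (Fin n), #U ≤ ⌊δ * n⌋₊ → (#U : ℝ) ≤ δ * n := fun U hU =>
    (Nat.cast_le.2 hU).trans (Nat.floor_le (by positivity))
  calc ∑ u ∈ S, ∑ v ∈ T, walkMatrix G d u v = (d : ℝ)⁻¹ * bipCount G S T := by
        simp only [walkMatrix, Matrix.smul_apply, smul_eq_mul, bipCount_eq_sum_adjMatrix, mul_sum]
    _ ≤ (d : ℝ)⁻¹ * (d * #S * #T / n + α * √(#S * #T)) := by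
        gcongr
        exact h S T (hle S hS) (hle T hT)
    _ = 1 / n * (#S * #T) + α / d * √(#S * #T) := by field_simp

end RegularGraph

theorem variation_distance_upper_bound_of_small_set_bipartite_density_general {n d t : ℕ}
    {G : SimpleGraph (Fin n)} [DecidableRel G.Adj] {α δ : ℝ} (hG : G.IsRegularOfDegree d)
    (hα : 0 < α) (hαd : α ≤ d / (32 ^ 2 * Real.log n ^ 2)) (hδ1 : δ ≤ 1)
    (hδ : 32 ^ 2 * α / d ≤ δ) (hδn : 1 ≤ δ * n) (h : SmallSetBipDensity G d α δ)
    (ht : 4 / Real.logb n (d / α) + 1 ≤ t) :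
    dTV G d t ≤ 1 / 4 * √(1 - δ) + 4 / (n : ℝ) ^ (Real.logb n (d / α) / 8) := by
  have hn : 2 ≤ n := two_le_of_le_div_mul_log_sq hα hαd
  have hn1 : (1 : ℝ) < n := Nat.one_lt_cast.2 hn
  have hlogn : 0 < Real.log n := Real.log_pos hn1
  have hd : 0 < d := by
    refine Nat.pos_of_ne_zero ?_
    rintro rfl
    exact hα.not_ge (by simpa using hαd)
  have hlog : 32 ^ 2 * (α / d * Real.log n ^ 2) ≤ 1 := by
    calc 32 ^ 2 * (α / d * Real.log n ^ 2) = α * (32 ^ 2 * Real.log n ^ 2) / d := by ring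
      _ ≤ 1 := div_le_one_of_le₀ ((le_div_iff₀ (by positivity)).1 hαd) (by positivity)
  rw [rpow_logb_div (by positivity) hn1.ne' (by positivity), ← inv_div α,
    Real.inv_rpow (by positivity), div_inv_eq_mul]
  refine Real.sSup_le ?_ (by positivity)
  rintro _ ⟨p, hp, rfl⟩
  exact hp.tvFromUniform_pow_mulVec_le (walkMatrix_mem_colStochastic hG hd)
    (h.hasSmallBlockBound hd (le_trans (by positivity) hδ)) hn (by positivity) hlog
    (by rwa [← mul_div_assoc]) hδ1 hδn (by rwa [inv_div])

section PowerDegree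

variable {n d : ℕ} {α ξ : ℝ}

theorem log_natCast_eq_mul_log (hd : (d : ℝ) = (n : ℝ) ^ ξ) (hn : 0 < n) :
    Real.log d = ξ * Real.log n := by
  rw [hd, Real.log_rpow (Nat.cast_pos.2 hn)]

theorem one_sub_log_div_log_mul_eq_logb (hα : 0 < α) (hd : (d : ℝ) = (n : ℝ) ^ ξ) (hn : 0 < n)
    (hd1 : 1 < d) : (1 - Real.log α / Real.log d) * ξ = Real.logb n (d / α) := by
  have hlogd : 0 < Real.log d := Real.log_pos (Nat.one_lt_cast.2 hd1)
  have hlog := log_natCast_eq_mul_log hd hn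
  have hlogn : Real.log n ≠ 0 := right_ne_zero_of_mul (hlog ▸ hlogd.ne')
  rw [Real.logb, Real.log_div (by positivity) hα.ne', eq_div_iff hlogn, mul_assoc, ← hlog, sub_mul,
    div_mul_cancel₀ _ hlogd.ne', one_mul]

theorem one_le_mul_of_mul_div_le {C d n δ : ℝ} (hC : 1 ≤ C) (hα : 1 ≤ α) (hd : 0 < d)
    (hdn : d ≤ n) (hδ : C * α / d ≤ δ) : 1 ≤ δ * n := by
  calc 1 ≤ C * α := one_le_mul_of_one_le_of_one_le hC hα
    _ = C * α / d * d := (div_mul_cancel₀ _ hd.ne').symm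
    _ ≤ δ * n := by gcongr; exact le_trans (by positivity) hδ

end PowerDegree

/-- variation distance bound from small-set bipartite density. -/
theorem variation_distance_upper_bound_of_small_set_bipartite_density
    (ξ : ℝ) (hξ0 : 0 < ξ) (hξ1 : ξ ≤ 1) :
    ∃ C₀ C₁ : ℝ, 0 < C₀ ∧ 0 < C₁ ∧
      ∀ (n d : ℕ) (G : SimpleGraph (Fin n)) [DecidableRel G.Adj] (α δ : ℝ),
        G.IsRegularOfDegree d →
        (d : ℝ) = (n : ℝ) ^ ξ →
        Real.sqrt d < α → α ≤ d →
        α ≤ d / (C₀ * Real.log d ^ 2) →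
        0 < δ → δ ≤ 1 → C₀ * α / d ≤ δ →
        SmallSetBipDensity G d α δ →
        ∀ t : ℕ,
          4 / ((1 - Real.log α / Real.log d) * ξ) + 1 ≤ (t : ℝ) →
          dTV G d t ≤ (1 / 4) * Real.sqrt (1 - δ) +
            C₁ / (n : ℝ) ^ ((1 - Real.log α / Real.log d) * ξ / 8) := by
  have hC₀ : (32 : ℝ) ^ 2 ≤ (32 / ξ) ^ 2 := by
    gcongr
    exact le_div_self (by norm_num) hξ0 hξ1
  refine ⟨(32 / ξ) ^ 2, 4, by positivity, by norm_num, ?_⟩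
  intro n d G _ α δ hG hdn hsα _ hαd _ hδ1 hδ h t ht
  have hα0 : 0 < α := (Real.sqrt_nonneg d).trans_lt hsα
  have hd : 2 ≤ d := two_le_of_le_div_mul_log_sq hα0 hαd
  have hd1 : (1 : ℝ) ≤ d := Nat.one_le_cast.2 (by omega)
  have hα1 : 1 ≤ α := (Real.one_le_sqrt.2 hd1).trans hsα.le
  have hn : 0 < n := by
    refine Nat.pos_of_ne_zero ?_
    rintro rfl
    have hd0 : d = 0 := by simpa [hξ0.ne'] using hdn
    omega
  have hdle : (d : ℝ) ≤ n := hdn ▸ Real.rpow_le_self_of_one_le (Nat.one_le_cast.2 hn) hξ1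
  have hlog : (32 / ξ) ^ 2 * Real.log d ^ 2 = 32 ^ 2 * Real.log n ^ 2 := by
    rw [log_natCast_eq_mul_log hdn hn]
    field_simp
  rw [one_sub_log_div_log_mul_eq_logb hα0 hdn hn hd] at ht ⊢
  have hδ' : 32 ^ 2 * α / d ≤ δ := le_trans (by gcongr) hδ
  exact variation_distance_upper_bound_of_small_set_bipartite_density_general hG hα0 (hlog ▸ hαd)
    hδ1 hδ' (one_le_mul_of_mul_div_le (by norm_num) hα1 (by linarith) hdle hδ') h ht
end
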